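/- A nonzero proper *-ideal I of finite type is *-homogeneous if and only if I is contained in exactly one maximal *-ideal of D. -/

import Mathlib

open scoped nonZeroDivisors

/-- A star operation on the nonzero fractional ideals of an integral domain `D`
with quotient field `K`: it fixes nonzero principal fractional ideals, commutes with
multiplication by nonzero principal fractional ideals, is extensive, monotone and
idempotent (on nonzero fractional ideals). -/
structure StarOperation (D K : Type*) [CommRing D] [IsDomain D] [Field K]
    [Algebra D K] [IsFractionRing D K] where
  star : FractionalIdeal D⁰ K → FractionalIdeal D⁰ K
  star_spanSingleton : ∀ x : K, x ≠ 0 →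
    star (FractionalIdeal.spanSingleton D⁰ x) = FractionalIdeal.spanSingleton D⁰ x
  star_smul : ∀ (x : K) (I : FractionalIdeal D⁰ K), x ≠ 0 → I ≠ 0 →
    star (FractionalIdeal.spanSingleton D⁰ x * I) = FractionalIdeal.spanSingleton D⁰ x * star I
  le_star : ∀ I : FractionalIdeal D⁰ K, I ≠ 0 → I ≤ star I
  star_mono : ∀ I J : FractionalIdeal D⁰ K, I ≠ 0 → J ≠ 0 → I ≤ J → star I ≤ star J
  star_idem : ∀ I : FractionalIdeal D⁰ K, I ≠ 0 → star (star I) = star I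

namespace StarOperation

variable {D K : Type*} [CommRing D] [IsDomain D] [Field K] [Algebra D K] [IsFractionRing D K]
variable (s : StarOperation D K)

/-- `*` has finite character: for every nonzero fractional ideal `I`, `I^*` is the union
of `J^*` over the nonzero finitely generated fractional subideals `J` of `I`. -/
def FiniteCharacter : Prop :=
  ∀ I : FractionalIdeal D⁰ K, I ≠ 0 → ∀ x ∈ s.star I,
    ∃ J : FractionalIdeal D⁰ K, J ≠ 0 ∧ (J : Submodule D K).FG ∧ J ≤ I ∧ x ∈ s.star J

/-- A (nonzero) integral ideal `I` of `D` is a `*`-ideal if `I^* = I`. -/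
def IsStarIdeal (I : Ideal D) : Prop :=
  I ≠ ⊥ ∧ s.star (I : FractionalIdeal D⁰ K) = (I : FractionalIdeal D⁰ K)

/-- An integral ideal `I` of `D` is a `*`-ideal of finite type if `I = J^*` for some
nonzero finitely generated ideal `J`. -/
def IsFiniteTypeStarIdeal (I : Ideal D) : Prop :=
  ∃ J : Ideal D, J ≠ ⊥ ∧ J.FG ∧
    s.star (J : FractionalIdeal D⁰ K) = (I : FractionalIdeal D⁰ K)

/-- A maximal `*`-ideal: maximal among proper integral `*`-ideals. -/
def IsMaxStarIdeal (M : Ideal D) : Prop :=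
  M ≠ ⊤ ∧ s.IsStarIdeal M ∧ ∀ J : Ideal D, J ≠ ⊤ → s.IsStarIdeal J → M ≤ J → J = M

/-- `I` is `*`-homogeneous: a proper `*`-ideal of finite type such that `(J + J')^* ≠ D`
for every pair `J`, `J'` of proper `*`-ideals of finite type containing `I`. -/
def IsHomog (I : Ideal D) : Prop :=
  I ≠ ⊤ ∧ s.IsStarIdeal I ∧ s.IsFiniteTypeStarIdeal I ∧
    ∀ J J' : Ideal D, J ≠ ⊤ → J' ≠ ⊤ → s.IsStarIdeal J → s.IsStarIdeal J' →
      s.IsFiniteTypeStarIdeal J → s.IsFiniteTypeStarIdeal J' → I ≤ J → I ≤ J' →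
      s.star ((J + J' : Ideal D) : FractionalIdeal D⁰ K) ≠ 1

/-- The set `M(I) = {x ∈ D : (xD + I)^* ≠ D}` attached to an ideal `I`. -/
def MSet (I : Ideal D) : Set D :=
  {x : D | s.star ((Ideal.span {x} + I : Ideal D) : FractionalIdeal D⁰ K) ≠ 1}

/-- `A` and `B` are `*`-comaximal if `(A + B)^* = D`. -/
def StarComaximal (A B : Ideal D) : Prop :=
  s.star ((A + B : Ideal D) : FractionalIdeal D⁰ K) = 1

/-- An integral ideal `I` is `*`-invertible if `(I · I⁻¹)^* = D`. -/
def StarInvertible (I : Ideal D) : Prop :=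
  s.star ((I : FractionalIdeal D⁰ K) * (I : FractionalIdeal D⁰ K)⁻¹) = 1

/-- `D` is a `*`-SH domain: every principal ideal generated by a nonzero nonunit is a
`*`-product of finitely many `*`-homogeneous ideals. -/
def IsSHDomain : Prop :=
  ∀ x : D, x ≠ 0 → ¬IsUnit x →
    ∃ T : Multiset (Ideal D), (∀ J ∈ T, s.IsHomog J) ∧
      s.star ((T.prod : Ideal D) : FractionalIdeal D⁰ K) =
        ((Ideal.span {x} : Ideal D) : FractionalIdeal D⁰ K)

/-- `D` has finite `*`-character: every nonzero nonunit lies in only finitely many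
maximal `*`-ideals. -/
def FiniteStarCharacter : Prop :=
  ∀ x : D, x ≠ 0 → ¬IsUnit x → {P : Ideal D | s.IsMaxStarIdeal P ∧ x ∈ P}.Finite

end StarOperation

/-! On integral ideals a star operation is a closure operator, and finite character makes it an
algebraic one: unions of chains of `*`-ideals are `*`-ideals, so by Zorn every proper `*`-ideal lies
in a maximal one. If `I` lies in only one, that ideal also contains every pair of proper `*`-ideals
above `I`. Conversely, distinct maximal `*`-ideals `M` and `N` satisfy `(M + N)^* = D`; by finite
character this already holds for finitely generated `A ⊆ M` and `B ⊆ N`, and then `(I + A)^*` and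
`(I + B)^*` show that an `I` of finite type inside `M ∩ N` is not `*`-homogeneous. -/

theorem exists_fg_le_sup_of_fg_le_sup {R M : Type*} [Semiring R] [AddCommMonoid M] [Module R M]
    {F P Q : Submodule R M} (hF : F.FG) (h : F ≤ P ⊔ Q) :
    ∃ A B : Submodule R M, A.FG ∧ B.FG ∧ A ≤ P ∧ B ≤ Q ∧ F ≤ A ⊔ B := by
  induction F, hF using Submodule.fg_induction with
  | singleton x =>
    obtain ⟨p, hp, q, hq, rfl⟩ := Submodule.mem_sup.1 (h (Submodule.mem_span_singleton_self x))
    refine ⟨_, _, Submodule.fg_span_singleton p, Submodule.fg_span_singleton q,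
      (Submodule.span_singleton_le_iff_mem _ _).2 hp,
      (Submodule.span_singleton_le_iff_mem _ _).2 hq,
      (Submodule.span_singleton_le_iff_mem _ _).2 ?_⟩
    exact Submodule.add_mem_sup (Submodule.mem_span_singleton_self p)
      (Submodule.mem_span_singleton_self q)
  | sup F₁ F₂ _ _ ih₁ ih₂ =>
    obtain ⟨A₁, B₁, hA₁, hB₁, hAP₁, hBQ₁, hF₁⟩ := ih₁ (le_sup_left.trans h)
    obtain ⟨A₂, B₂, hA₂, hB₂, hAP₂, hBQ₂, hF₂⟩ := ih₂ (le_sup_right.trans h)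
    refine ⟨A₁ ⊔ A₂, B₁ ⊔ B₂, hA₁.sup hA₂, hB₁.sup hB₂, sup_le hAP₁ hAP₂, sup_le hBQ₁ hBQ₂, ?_⟩
    rw [sup_sup_sup_comm]
    exact sup_le_sup hF₁ hF₂

namespace StarOperation

variable {D K : Type*} [CommRing D] [IsDomain D] [Field K] [Algebra D K] [IsFractionRing D K]
variable {s : StarOperation D K} {A I M N : Ideal D}

theorem star_one (s : StarOperation D K) : s.star 1 = 1 := by
  simpa only [FractionalIdeal.spanSingleton_one] using s.star_spanSingleton 1 one_ne_zero

theorem star_coeIdeal_le_one (s : StarOperation D K) (hA : A ≠ ⊥) :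
    s.star (A : FractionalIdeal D⁰ K) ≤ 1 := by
  rw [← s.star_one]
  exact s.star_mono _ _ (FractionalIdeal.coeIdeal_ne_zero.2 hA) one_ne_zero
    FractionalIdeal.coeIdeal_le_one

/-- The contraction `A^* ∩ D` of `A^*` to `D`, which is `A^*` itself when `A ≠ 0`. -/
def starContraction (s : StarOperation D K) (A : Ideal D) : Ideal D :=
  (s.star (A : FractionalIdeal D⁰ K) : Submodule D K).comap (Algebra.linearMap D K)

theorem coe_starContraction (s : StarOperation D K) (hA : A ≠ ⊥) :
    (s.starContraction A : FractionalIdeal D⁰ K) = s.star A := by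
  obtain ⟨B, hB⟩ := FractionalIdeal.le_one_iff_exists_coeIdeal.1 (s.star_coeIdeal_le_one hA)
  suffices h : s.starContraction A = B by rw [h, hB]
  ext x
  change algebraMap D K x ∈ s.star A ↔ x ∈ B
  simp only [← hB, FractionalIdeal.mem_coeIdeal, (IsFractionRing.injective D K).eq_iff,
    exists_eq_right]

theorem le_starContraction (s : StarOperation D K) (hA : A ≠ ⊥) : A ≤ s.starContraction A := by
  rw [← FractionalIdeal.coeIdeal_le_coeIdeal K, s.coe_starContraction hA]
  exact s.le_star _ (FractionalIdeal.coeIdeal_ne_zero.2 hA)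

theorem starContraction_le_of_le_starContraction (s : StarOperation D K) (hA : A ≠ ⊥) (hI : I ≠ ⊥)
    (h : A ≤ s.starContraction I) : s.starContraction A ≤ s.starContraction I := by
  have hA' := FractionalIdeal.coeIdeal_ne_zero (K := K).2 hA
  have hI' := FractionalIdeal.coeIdeal_ne_zero (K := K).2 hI
  rw [← FractionalIdeal.coeIdeal_le_coeIdeal K, s.coe_starContraction hI] at h
  rw [← FractionalIdeal.coeIdeal_le_coeIdeal K, s.coe_starContraction hA,
    s.coe_starContraction hI, ← s.star_idem _ hI']
  exact s.star_mono _ _ hA' (ne_bot_of_le_ne_bot hI' (s.le_star _ hI')) h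

open Classical in
/-- The star operation as a closure operator on all integral ideals of `D`. Since a star operation
is unconstrained at the zero ideal, `0` is declared to be closed. -/
noncomputable def closure (s : StarOperation D K) : ClosureOperator (Ideal D) :=
  .mk₂ (fun A ↦ if A = ⊥ then ⊥ else s.starContraction A)
    (fun A ↦ by
      split_ifs with hA
      · exact hA.le
      · exact s.le_starContraction hA)
    (fun A B h ↦ by
      by_cases hA : A = ⊥
      · simp only [hA, if_true, bot_le]
      by_cases hB : B = ⊥
      · simp only [hB, if_true, le_bot_iff] at h
        exact absurd h hA
      simp only [hA, hB, if_false] at h ⊢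
      exact s.starContraction_le_of_le_starContraction hA hB h)

theorem closure_of_ne_bot (s : StarOperation D K) (hA : A ≠ ⊥) :
    s.closure A = s.starContraction A :=
  if_neg hA

theorem coe_closure (s : StarOperation D K) (hA : A ≠ ⊥) :
    (s.closure A : FractionalIdeal D⁰ K) = s.star A := by
  rw [s.closure_of_ne_bot hA, s.coe_starContraction hA]

theorem mem_closure_iff (s : StarOperation D K) (hA : A ≠ ⊥) {x : D} :
    x ∈ s.closure A ↔ algebraMap D K x ∈ s.star (A : FractionalIdeal D⁰ K) := by
  rw [s.closure_of_ne_bot hA]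
  rfl

theorem star_coeIdeal_eq_coeIdeal_iff (s : StarOperation D K) (hA : A ≠ ⊥) :
    s.star (A : FractionalIdeal D⁰ K) = (I : FractionalIdeal D⁰ K) ↔ s.closure A = I := by
  rw [← s.coe_closure hA, FractionalIdeal.coeIdeal_inj]

theorem star_coeIdeal_eq_one_iff (s : StarOperation D K) (hA : A ≠ ⊥) :
    s.star (A : FractionalIdeal D⁰ K) = 1 ↔ s.closure A = ⊤ := by
  rw [← FractionalIdeal.coeIdeal_top, s.star_coeIdeal_eq_coeIdeal_iff hA]

theorem isStarIdeal_iff : s.IsStarIdeal I ↔ I ≠ ⊥ ∧ s.closure.IsClosed I := by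
  rw [s.closure.isClosed_iff]
  exact and_congr_right s.star_coeIdeal_eq_coeIdeal_iff

theorem IsStarIdeal.isClosed (hI : s.IsStarIdeal I) : s.closure.IsClosed I :=
  (isStarIdeal_iff.1 hI).2

theorem IsStarIdeal.closure_ne_top (hI : s.IsStarIdeal I) (hproper : I ≠ ⊤) (h : A ≤ I) :
    s.closure A ≠ ⊤ :=
  ne_top_of_le_ne_top hproper (ClosureOperator.closure_min h hI.isClosed)

theorem isFiniteTypeStarIdeal_iff :
    s.IsFiniteTypeStarIdeal I ↔ ∃ F : Ideal D, F ≠ ⊥ ∧ F.FG ∧ s.closure F = I :=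
  exists_congr fun _ ↦ and_congr_right fun hF ↦
    and_congr_right fun _ ↦ s.star_coeIdeal_eq_coeIdeal_iff hF

theorem isStarIdeal_closure (s : StarOperation D K) (hA : A ≠ ⊥) : s.IsStarIdeal (s.closure A) :=
  isStarIdeal_iff.2 ⟨ne_bot_of_le_ne_bot hA (s.closure.le_closure A), s.closure.isClosed_closure A⟩

theorem IsFiniteTypeStarIdeal.isStarIdeal (hI : s.IsFiniteTypeStarIdeal I) :
    s.IsStarIdeal I := by
  obtain ⟨F, hF0, -, rfl⟩ := isFiniteTypeStarIdeal_iff.1 hI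
  exact s.isStarIdeal_closure hF0

theorem IsFiniteTypeStarIdeal.closure_sup (hI : s.IsFiniteTypeStarIdeal I) (hA : A.FG) :
    s.IsFiniteTypeStarIdeal (s.closure (I ⊔ A)) := by
  obtain ⟨F, hF0, hF, rfl⟩ := isFiniteTypeStarIdeal_iff.1 hI
  exact isFiniteTypeStarIdeal_iff.2 ⟨F ⊔ A, ne_bot_of_le_ne_bot hF0 le_sup_left,
    Submodule.FG.sup hF hA, (s.closure.closure_sup_closure_left F A).symm⟩

theorem isHomog_iff : s.IsHomog I ↔ I ≠ ⊤ ∧ s.IsFiniteTypeStarIdeal I ∧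
    ∀ J J' : Ideal D, J ≠ ⊤ → J' ≠ ⊤ → s.IsFiniteTypeStarIdeal J → s.IsFiniteTypeStarIdeal J' →
      I ≤ J → I ≤ J' → s.closure (J ⊔ J') ≠ ⊤ := by
  have star_add_eq_one_iff {J J' : Ideal D} (hJ : s.IsStarIdeal J) :
      s.star ((J + J' : Ideal D) : FractionalIdeal D⁰ K) = 1 ↔ s.closure (J ⊔ J') = ⊤ :=
    s.star_coeIdeal_eq_one_iff (ne_bot_of_le_ne_bot hJ.1 le_sup_left)
  constructor
  · rintro ⟨hI, -, hft, h⟩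
    refine ⟨hI, hft, fun J J' hJ hJ' hJft hJft' hIJ hIJ' ↦ ?_⟩
    rw [Ne, ← star_add_eq_one_iff hJft.isStarIdeal]
    exact h J J' hJ hJ' hJft.isStarIdeal hJft'.isStarIdeal hJft hJft' hIJ hIJ'
  · rintro ⟨hI, hft, h⟩
    refine ⟨hI, hft.isStarIdeal, hft, fun J J' hJ hJ' hJs _ hJft hJft' hIJ hIJ' ↦ ?_⟩
    rw [Ne, star_add_eq_one_iff hJs]
    exact h J J' hJ hJ' hJft hJft' hIJ hIJ'

theorem FiniteCharacter.exists_fg_le_mem_closure (hs : s.FiniteCharacter) {x : D}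
    (hx : x ∈ s.closure A) : ∃ F : Ideal D, F.FG ∧ F ≤ A ∧ x ∈ s.closure F := by
  obtain rfl | hA := eq_or_ne A ⊥
  · exact ⟨⊥, Submodule.fg_bot, le_rfl, hx⟩
  obtain ⟨J, hJ0, hJ, hJA, hxJ⟩ :=
    hs _ (FractionalIdeal.coeIdeal_ne_zero.2 hA) _ ((s.mem_closure_iff hA).1 hx)
  obtain ⟨F, rfl⟩ := FractionalIdeal.le_one_iff_exists_coeIdeal.1
    (hJA.trans FractionalIdeal.coeIdeal_le_one)
  exact ⟨F, (FractionalIdeal.coeIdeal_fg D⁰ (IsFractionRing.injective D K) F).1 hJ,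
    (FractionalIdeal.coeIdeal_le_coeIdeal K).1 hJA,
    (s.mem_closure_iff (FractionalIdeal.coeIdeal_ne_zero.1 hJ0)).2 hxJ⟩

theorem FiniteCharacter.isStarIdeal_sSup (hs : s.FiniteCharacter) {S : Set (Ideal D)}
    (hS : S.Nonempty) (hdir : DirectedOn (· ≤ ·) S) (hstar : ∀ J ∈ S, s.IsStarIdeal J) :
    s.IsStarIdeal (sSup S) := by
  have hne : sSup S ≠ ⊥ :=
    let ⟨J, hJ⟩ := hS
    ne_bot_of_le_ne_bot (hstar J hJ).1 (le_sSup hJ)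
  refine isStarIdeal_iff.2 ⟨hne, ClosureOperator.isClosed_iff_closure_le.2 fun x hx ↦ ?_⟩
  obtain ⟨F, hF, hFS, hxF⟩ := hs.exists_fg_le_mem_closure hx
  obtain ⟨J, hJ, hFJ⟩ := (CompleteLattice.isCompactElement_iff_le_of_directed_sSup_le _ F).1
    ((Submodule.fg_iff_compact F).1 hF) S hS hdir hFS
  exact le_sSup hJ (ClosureOperator.closure_min hFJ (hstar J hJ).isClosed hxF)

theorem FiniteCharacter.exists_le_isMaxStarIdeal (hs : s.FiniteCharacter) (hI : s.IsStarIdeal I)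
    (hproper : I ≠ ⊤) : ∃ M, s.IsMaxStarIdeal M ∧ I ≤ M := by
  have chain_bound : ∀ C ⊆ {J : Ideal D | J ≠ ⊤ ∧ s.IsStarIdeal J}, IsChain (· ≤ ·) C →
      ∀ J ∈ C, ∃ L ∈ {J : Ideal D | J ≠ ⊤ ∧ s.IsStarIdeal J}, ∀ J ∈ C, J ≤ L :=
    fun C hC hchain J hJ ↦ ⟨sSup C,
      ⟨(CompleteLattice.IsCompactElement.directed_sSup_lt_of_lt Ideal.isCompactElement_top ⟨J, hJ⟩
          hchain.directedOn fun L hL ↦ (hC hL).1.lt_top).ne,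
        hs.isStarIdeal_sSup ⟨J, hJ⟩ hchain.directedOn fun L hL ↦ (hC hL).2⟩,
      fun L hL ↦ le_sSup hL⟩
  obtain ⟨M, hIM, ⟨hMtop, hM⟩, hmax⟩ := zorn_le_nonempty₀ _ chain_bound I ⟨hproper, hI⟩
  exact ⟨M, ⟨hMtop, hM, fun J hJtop hJ hMJ ↦ (hmax ⟨hJtop, hJ⟩ hMJ).antisymm hMJ⟩, hIM⟩

theorem FiniteCharacter.exists_fg_closure_sup_eq_top (hs : s.FiniteCharacter)
    (h : s.closure (M ⊔ N) = ⊤) :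
    ∃ A B : Ideal D, A.FG ∧ B.FG ∧ A ≤ M ∧ B ≤ N ∧ s.closure (A ⊔ B) = ⊤ := by
  obtain ⟨F, hF, hFMN, hF1⟩ := hs.exists_fg_le_mem_closure ((Ideal.eq_top_iff_one _).1 h)
  obtain ⟨A, B, hA, hB, hAM, hBN, hFAB⟩ := exists_fg_le_sup_of_fg_le_sup hF hFMN
  exact ⟨A, B, hA, hB, hAM, hBN,
    (Ideal.eq_top_iff_one _).2 (s.closure.monotone hFAB hF1)⟩

theorem IsMaxStarIdeal.closure_sup_eq_top (hM : s.IsMaxStarIdeal M) (hN : s.IsMaxStarIdeal N)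
    (hne : M ≠ N) : s.closure (M ⊔ N) = ⊤ := by
  by_contra htop
  have hstar := s.isStarIdeal_closure (ne_bot_of_le_ne_bot hM.2.1.1 (le_sup_left (b := N)))
  have hle := s.closure.le_closure (M ⊔ N)
  have hclosureM := hM.2.2 _ htop hstar (le_sup_left.trans hle)
  have hclosureN := hN.2.2 _ htop hstar (le_sup_right.trans hle)
  exact hne (hclosureM.symm.trans hclosureN)

theorem IsHomog.eq_of_isMaxStarIdeal (hs : s.FiniteCharacter) (hI : s.IsHomog I)
    (hM : s.IsMaxStarIdeal M) (hN : s.IsMaxStarIdeal N) (hIM : I ≤ M) (hIN : I ≤ N) : M = N := by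
  obtain ⟨-, hft, hpair⟩ := isHomog_iff.1 hI
  by_contra hne
  obtain ⟨A, B, hA, hB, hAM, hBN, hAB⟩ :=
    hs.exists_fg_closure_sup_eq_top (hM.closure_sup_eq_top hN hne)
  have hIA : I ⊔ A ≤ s.closure (I ⊔ A) := s.closure.le_closure _
  have hIB : I ⊔ B ≤ s.closure (I ⊔ B) := s.closure.le_closure _
  refine hpair _ _ (hM.2.1.closure_ne_top hM.1 (sup_le hIM hAM))
    (hN.2.1.closure_ne_top hN.1 (sup_le hIN hBN)) (hft.closure_sup hA) (hft.closure_sup hB)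
    (le_sup_left.trans hIA) (le_sup_left.trans hIB) (top_le_iff.1 ?_)
  rw [← hAB]
  exact s.closure.monotone (sup_le_sup (le_sup_right.trans hIA) (le_sup_right.trans hIB))

end StarOperation

/-- A nonzero proper `*`-ideal `I` of finite type is `*`-homogeneous if and
only if `I` is contained in exactly one maximal `*`-ideal of `D`. -/
theorem isHomog_iff_unique_maxStarIdeal {D K : Type*} [CommRing D] [IsDomain D] [Field K]
    [Algebra D K] [IsFractionRing D K] (s : StarOperation D K) (hs : s.FiniteCharacter)
    (I : Ideal D) (h0 : I ≠ ⊥) (hproper : I ≠ ⊤) (hstar : s.IsStarIdeal I)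
    (hft : s.IsFiniteTypeStarIdeal I) :
    s.IsHomog I ↔ ∃! M : Ideal D, s.IsMaxStarIdeal M ∧ I ≤ M := by
  constructor
  · intro hI
    obtain ⟨M, hM, hIM⟩ := hs.exists_le_isMaxStarIdeal hstar hproper
    exact ⟨M, ⟨hM, hIM⟩, fun N ⟨hN, hIN⟩ ↦ hI.eq_of_isMaxStarIdeal hs hN hM hIN hIM⟩
  · rintro ⟨M, ⟨hM, -⟩, hunique⟩
    have le_of_proper {J : Ideal D} (hJtop : J ≠ ⊤) (hJ : s.IsFiniteTypeStarIdeal J)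
        (hIJ : I ≤ J) : J ≤ M := by
      obtain ⟨N, hN, hJN⟩ := hs.exists_le_isMaxStarIdeal hJ.isStarIdeal hJtop
      exact hunique N ⟨hN, hIJ.trans hJN⟩ ▸ hJN
    refine StarOperation.isHomog_iff.2 ⟨hproper, hft, fun J J' hJtop hJtop' hJ hJ' hIJ hIJ' ↦ ?_⟩
    exact hM.2.1.closure_ne_top hM.1
      (sup_le (le_of_proper hJtop hJ hIJ) (le_of_proper hJtop' hJ' hIJ'))
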